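/- Let N ≥ 3 and let ψ : [0,∞) → ℝ be infinitely differentiable with ψ(0) = 0, ψ'(0) = 1, ψ(r) > 0 for r > 0, and ψ''(r) ≥ 0 for all r > 0. Define V(r) = ω_N ∫₀^r ψ(t)^{N−1} dt and let G : [0,∞) → [0,∞) be the inverse function of V. Then for every nonincreasing, locally absolutely continuous function f : (0,∞) → [0,∞) with lim_{s→∞} f(s) = 0 and ∫₀^∞ f'(s)² · ( ψ(G(s)) · G(s) )^{N−1} ds < ∞, one has ((N−2)/2)² ∫₀^∞ f(s)² · G(s)^{N−3} · ψ(G(s))^{1−N} ds ≤ ω_N² ∫₀^∞ f'(s)² · ( ψ(G(s)) · G(s) )^{N−1} ds. -/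

import Mathlib

open MeasureTheory

/-- Surface area of the unit sphere `S^{N-1} ⊂ ℝ^N`. -/
noncomputable def omegaN (N : ℕ) : ℝ :=
  2 * Real.pi ^ ((N : ℝ) / 2) / Real.Gamma ((N : ℝ) / 2)

/-!
The substitution `s = V r` turns the inequality into the classical weighted Hardy inequality on
`(0, ∞)` for `f ∘ V`: the weights become `r ^ (N - p - 1)` and `r ^ (N - 1)`, and `ψ` disappears.
The classical inequality follows by bounding `‖f (V x)‖` by the tail integral of the derivative over
`(x, ∞)`, applying Hölder's inequality there against the weight `t ^ (-(c + 1))`, where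
`c = (N - p) / p`, and integrating in `x` with Tonelli's theorem.
-/

section

open Set Filter
open scoped ENNReal

theorem lintegral_rpow_le_lintegral_rpow_mul_lintegral_weight {α : Type*} [MeasurableSpace α]
    {μ : Measure α} {p : ℝ} (hp : 1 ≤ p) {f w : α → ℝ≥0∞} (hf : AEMeasurable f μ)
    (hw : AEMeasurable w μ) (hw_ne_zero : ∀ᵐ x ∂μ, w x ≠ 0) (hw_ne_top : ∀ᵐ x ∂μ, w x ≠ ∞) :
    (∫⁻ x, f x ∂μ) ^ p ≤ (∫⁻ x, w x ∂μ) ^ (p - 1) * ∫⁻ x, w x ^ (1 - p) * f x ^ p ∂μ := by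
  have hp₀ : p ≠ 0 := by positivity
  have factor : ∫⁻ x, f x ∂μ = ∫⁻ x, w x ^ ((p - 1) / p) * (w x ^ (1 - p) * f x ^ p) ^ p⁻¹ ∂μ := by
    refine lintegral_congr_ae ?_
    filter_upwards [hw_ne_zero, hw_ne_top] with x h₀ h_top
    rw [ENNReal.mul_rpow_of_nonneg _ _ (by positivity), ENNReal.rpow_rpow_inv hp₀,
      ← ENNReal.rpow_mul, ← mul_assoc, ← ENNReal.rpow_add _ _ h₀ h_top,
      show (p - 1) / p + (1 - p) * p⁻¹ = 0 by ring, ENNReal.rpow_zero, one_mul]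
  have holder : ∫⁻ x, f x ∂μ ≤
      (∫⁻ x, w x ∂μ) ^ ((p - 1) / p) * (∫⁻ x, w x ^ (1 - p) * f x ^ p ∂μ) ^ p⁻¹ :=
    factor.trans_le <| ENNReal.lintegral_mul_norm_pow_le hw
      ((hw.pow_const _).mul (hf.pow_const _)) (div_nonneg (sub_nonneg.2 hp) (by positivity))
      (by positivity) (by field_simp; ring)
  calc (∫⁻ x, f x ∂μ) ^ p
      ≤ ((∫⁻ x, w x ∂μ) ^ ((p - 1) / p) *
          (∫⁻ x, w x ^ (1 - p) * f x ^ p ∂μ) ^ p⁻¹) ^ p := by gcongr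
    _ = (∫⁻ x, w x ∂μ) ^ (p - 1) * ∫⁻ x, w x ^ (1 - p) * f x ^ p ∂μ := by
        rw [ENNReal.mul_rpow_of_nonneg _ _ (by positivity), ← ENNReal.rpow_mul,
          div_mul_cancel₀ _ hp₀, ENNReal.rpow_inv_rpow hp₀]

theorem lintegral_mul_lintegral_Ioi_swap {α : Type*} [MeasurableSpace α] [TopologicalSpace α]
    [LinearOrder α] [OrderClosedTopology α] [SecondCountableTopology α] [OpensMeasurableSpace α]
    {μ : Measure α} [SFinite μ] {f g : α → ℝ≥0∞} (hf : AEMeasurable f μ) (hg : AEMeasurable g μ) :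
    ∫⁻ x, f x * ∫⁻ y in Ioi x, g y ∂μ ∂μ = ∫⁻ y, g y * ∫⁻ x in Iio y, f x ∂μ ∂μ := by
  let K (x y : α) : ℝ≥0∞ := {z : α × α | z.1 < z.2}.indicator (fun z => f z.1 * g z.2) (x, y)
  have hK : AEMeasurable (Function.uncurry K) (μ.prod μ) :=
    (hf.comp_fst.mul hg.comp_snd).indicator (measurableSet_lt measurable_fst measurable_snd)
  have inner_left (x : α) : ∫⁻ y, K x y ∂μ = f x * ∫⁻ y in Ioi x, g y ∂μ := by
    rw [← lintegral_const_mul'' _ hg.restrict, ← lintegral_indicator measurableSet_Ioi]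
    rfl
  have inner_right (y : α) : ∫⁻ x, K x y ∂μ = g y * ∫⁻ x in Iio y, f x ∂μ := by
    simp_rw [mul_comm (g y)]
    rw [← lintegral_mul_const'' _ hf.restrict, ← lintegral_indicator measurableSet_Iio]
    rfl
  simp_rw [← inner_left, ← inner_right]
  exact lintegral_lintegral_swap hK

theorem setLIntegral_Ioi_mul_lintegral_Ioi_swap {α : Type*} [MeasurableSpace α]
    [TopologicalSpace α] [LinearOrder α] [OrderClosedTopology α] [SecondCountableTopology α]
    [OpensMeasurableSpace α] {μ : Measure α} [SFinite μ] {f g : α → ℝ≥0∞} {a : α}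
    (hf : AEMeasurable f (μ.restrict (Ioi a))) (hg : AEMeasurable g (μ.restrict (Ioi a))) :
    ∫⁻ x in Ioi a, f x * ∫⁻ y in Ioi x, g y ∂μ ∂μ =
      ∫⁻ y in Ioi a, g y * ∫⁻ x in Ioo a y, f x ∂μ ∂μ := by
  have swap := lintegral_mul_lintegral_Ioi_swap hf hg
  simp only [Measure.restrict_restrict, measurableSet_Ioi, measurableSet_Iio, Ioi_inter_Ioi,
    Iio_inter_Ioi] at swap
  rw [← swap]
  refine setLIntegral_congr_fun measurableSet_Ioi fun x (hx : a < x) => ?_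
  rw [sup_of_le_left hx.le]

theorem lintegral_Ioi_rpow {a r : ℝ} (ha : a < -1) (hr : 0 < r) :
    ∫⁻ x in Ioi r, ENNReal.ofReal (x ^ a) = ENNReal.ofReal (-r ^ (a + 1) / (a + 1)) := by
  rw [← integral_Ioi_rpow_of_lt ha hr,
    ofReal_integral_eq_lintegral_ofReal (integrableOn_Ioi_rpow_of_lt ha hr)]
  exact ae_restrict_of_forall_mem measurableSet_Ioi fun x hx => Real.rpow_nonneg (hr.trans hx).le a

theorem lintegral_Ioo_zero_rpow {a r : ℝ} (ha : -1 < a) (hr : 0 < r) :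
    ∫⁻ x in Ioo 0 r, ENNReal.ofReal (x ^ a) = ENNReal.ofReal (r ^ (a + 1) / (a + 1)) := by
  rw [← ofReal_integral_eq_lintegral_ofReal
      ((intervalIntegral.integrableOn_Ioo_rpow_iff hr).2 ha)
      (ae_restrict_of_forall_mem measurableSet_Ioo fun x hx => Real.rpow_nonneg hx.1.le a),
    ← integral_Ioc_eq_integral_Ioo, ← intervalIntegral.integral_of_le hr.le,
    integral_rpow (.inl ha), Real.zero_rpow (by linarith), sub_zero]

theorem enorm_le_lintegral_Ioi_enorm {E : Type*} [NormedAddCommGroup E] [NormedSpace ℝ E]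
    {f f' : ℝ → E} {a : ℝ} (hf : ∀ b, a ≤ b → f b - f a = ∫ t in a..b, f' t)
    (hlim : Tendsto f atTop (nhds 0)) : ‖f a‖ₑ ≤ ∫⁻ t in Ioi a, ‖f' t‖ₑ := by
  have increment_tendsto : Tendsto (fun b => ‖f b - f a‖ₑ) atTop (nhds ‖f a‖ₑ) := by
    simpa using (hlim.sub_const (f a)).enorm
  refine le_of_tendsto increment_tendsto ?_
  filter_upwards [eventually_ge_atTop a] with b hab
  rw [hf b hab, intervalIntegral.integral_of_le hab]
  exact (enorm_integral_le_lintegral_enorm _).trans (lintegral_mono_set Ioc_subset_Ioi_self)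

theorem image_Ioi_of_strictMonoOn {α β : Type*} [LinearOrder α] [Preorder β] {f : α → β} {a b : α}
    {c : β} (hf : StrictMonoOn f (Ioi a)) (himage : f '' Ioi a = Ioi c) (hb : b ∈ Ioi a) :
    f '' Ioi b = Ioi (f b) := by
  refine Subset.antisymm (image_subset_iff.2 fun x hx => hf hb (lt_trans hb hx) hx) fun y hy => ?_
  have hcb : c < f b := himage.subset (mem_image_of_mem f hb)
  obtain ⟨x, hx, rfl⟩ := himage.superset (hcb.trans hy)
  exact mem_image_of_mem f ((hf.lt_iff_lt hb hx).1 hy)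

theorem lintegral_Ioi_rpow_le {p c x : ℝ} (hp : 1 ≤ p) (hc : 0 < c) (hx : 0 < x)
    {h : ℝ → ℝ≥0∞} (hh : AEMeasurable h (volume.restrict (Ioi x))) :
    (∫⁻ t in Ioi x, h t) ^ p ≤ ENNReal.ofReal ((x ^ (-c) / c) ^ (p - 1)) *
      ∫⁻ t in Ioi x, ENNReal.ofReal (t ^ ((c + 1) * (p - 1))) * h t ^ p := by
  -- With this weight both the Hölder factor and, after exchanging the order of integration, the
  -- remaining inner integral are pure powers, so Hardy's inequality gets its sharp constant.
  let w (t : ℝ) : ℝ≥0∞ := ENNReal.ofReal (t ^ (-(c + 1)))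
  have weight_integral : ∫⁻ t in Ioi x, w t = ENNReal.ofReal (x ^ (-c) / c) := by
    rw [lintegral_Ioi_rpow (by linarith) hx]
    ring_nf
  have weight_ne_zero : ∀ᵐ t ∂volume.restrict (Ioi x), w t ≠ 0 :=
    ae_restrict_of_forall_mem measurableSet_Ioi fun t ht =>
      (ENNReal.ofReal_pos.2 (Real.rpow_pos_of_pos (hx.trans ht) _)).ne'
  have weight_rpow : ∀ t ∈ Ioi x, w t ^ (1 - p) = ENNReal.ofReal (t ^ ((c + 1) * (p - 1))) := by
    intro t ht
    have ht₀ : 0 < t := hx.trans ht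
    rw [ENNReal.ofReal_rpow_of_pos (by positivity), ← Real.rpow_mul ht₀.le]
    ring_nf
  calc (∫⁻ t in Ioi x, h t) ^ p
      ≤ (∫⁻ t in Ioi x, w t) ^ (p - 1) * ∫⁻ t in Ioi x, w t ^ (1 - p) * h t ^ p :=
        lintegral_rpow_le_lintegral_rpow_mul_lintegral_weight hp hh (by fun_prop) weight_ne_zero
          (ae_of_all _ fun t => ENNReal.ofReal_ne_top)
    _ = _ := by
        rw [weight_integral, ENNReal.ofReal_rpow_of_pos (by positivity),
          setLIntegral_congr_fun measurableSet_Ioi fun t ht => congrArg (· * h t ^ p)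
            (weight_rpow t ht)]

theorem lintegral_Ioi_rpow_mul_lintegral_Ioi_rpow_le {p c : ℝ} (hp : 1 ≤ p) (hc : 0 < c)
    {h : ℝ → ℝ≥0∞} (hh : AEMeasurable h (volume.restrict (Ioi 0))) :
    ENNReal.ofReal (c ^ p) *
        ∫⁻ x in Ioi 0, ENNReal.ofReal (x ^ (p * c - 1)) * (∫⁻ t in Ioi x, h t) ^ p ≤
      ∫⁻ x in Ioi 0, ENNReal.ofReal (x ^ (p * c + p - 1)) * h x ^ p := by
  let H (t : ℝ) : ℝ≥0∞ := ENNReal.ofReal (t ^ ((c + 1) * (p - 1))) * h t ^ p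
  have hH : AEMeasurable H (volume.restrict (Ioi 0)) := by fun_prop
  calc _ = ∫⁻ x in Ioi 0, ENNReal.ofReal (c ^ p) *
          (ENNReal.ofReal (x ^ (p * c - 1)) * (∫⁻ t in Ioi x, h t) ^ p) :=
        (lintegral_const_mul' _ _ ENNReal.ofReal_ne_top).symm
    _ ≤ ∫⁻ x in Ioi 0, ENNReal.ofReal (c * x ^ (c - 1)) * ∫⁻ t in Ioi x, H t := by
        refine setLIntegral_mono' measurableSet_Ioi fun x (hx : 0 < x) => ?_
        have tail := lintegral_Ioi_rpow_le hp hc hx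
          (hh.mono_measure (Measure.restrict_mono_set _ (Ioi_subset_Ioi hx.le)))
        have coefficient : c ^ p * (x ^ (p * c - 1) * (x ^ (-c) / c) ^ (p - 1)) =
            c * x ^ (c - 1) := by
          rw [Real.div_rpow (by positivity) hc.le, ← Real.rpow_mul hx.le, mul_div_assoc',
            ← Real.rpow_add hx, Real.rpow_sub_one hc.ne']
          field_simp
          ring_nf
        rw [← coefficient, ENNReal.ofReal_mul (by positivity), ENNReal.ofReal_mul (by positivity),
          mul_assoc, mul_assoc]
        gcongr
    _ = ∫⁻ t in Ioi 0, H t * ∫⁻ x in Ioo 0 t, ENNReal.ofReal (c * x ^ (c - 1)) :=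
        setLIntegral_Ioi_mul_lintegral_Ioi_swap (by fun_prop) hH
    _ = ∫⁻ t in Ioi 0, ENNReal.ofReal (t ^ (p * c + p - 1)) * h t ^ p := by
        refine setLIntegral_congr_fun measurableSet_Ioi fun t (ht : 0 < t) => ?_
        have exponent : t ^ ((c + 1) * (p - 1)) * t ^ c = t ^ (p * c + p - 1) := by
          rw [← Real.rpow_add ht]
          ring_nf
        have primitive : ∫⁻ x in Ioo 0 t, ENNReal.ofReal (c * x ^ (c - 1)) =
            ENNReal.ofReal (t ^ c) := by
          simp_rw [ENNReal.ofReal_mul hc.le]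
          rw [lintegral_const_mul' _ _ ENNReal.ofReal_ne_top,
            lintegral_Ioo_zero_rpow (by linarith) ht, ← ENNReal.ofReal_mul hc.le,
            sub_add_cancel, mul_div_cancel₀ _ hc.ne']
        simp only [H]
        rw [primitive, mul_right_comm, ← ENNReal.ofReal_mul (by positivity), exponent]

theorem strictMonoOn_Ioi_of_hasDerivAt_pos {V v : ℝ → ℝ} {a : ℝ}
    (hderiv : ∀ r ∈ Ioi a, HasDerivAt V (v r) r) (hv : ∀ r ∈ Ioi a, 0 < v r) :
    StrictMonoOn V (Ioi a) := by
  rw [← interior_Ioi] at hv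
  exact strictMonoOn_of_hasDerivWithinAt_pos (convex_Ioi a)
    (fun r hr => (hderiv r hr).continuousAt.continuousWithinAt)
    (fun r hr => (hderiv r (interior_subset hr)).hasDerivWithinAt) hv

theorem lintegral_Ioi_eq_lintegral_Ioi_comp {V v : ℝ → ℝ} {a b : ℝ}
    (hderiv : ∀ r ∈ Ioi a, HasDerivAt V (v r) r) (hv : ∀ r ∈ Ioi a, 0 < v r)
    (himage : V '' Ioi a = Ioi b) (F : ℝ → ℝ≥0∞) :
    ∫⁻ s in Ioi b, F s = ∫⁻ r in Ioi a, ENNReal.ofReal (v r) * F (V r) := by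
  rw [← himage, lintegral_image_eq_lintegral_abs_deriv_mul measurableSet_Ioi
    (fun r hr => (hderiv r hr).hasDerivWithinAt)
    (strictMonoOn_Ioi_of_hasDerivAt_pos hderiv hv).injOn]
  exact setLIntegral_congr_fun measurableSet_Ioi fun r hr => by rw [abs_of_pos (hv r hr)]

theorem comp_le_lintegral_Ioi_comp {V v : ℝ → ℝ} {a b : ℝ}
    (hderiv : ∀ r ∈ Ioi a, HasDerivAt V (v r) r) (hv : ∀ r ∈ Ioi a, 0 < v r)
    (himage : V '' Ioi a = Ioi b) {f h : ℝ → ℝ≥0∞}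
    (hf : ∀ s ∈ Ioi b, f s ≤ ∫⁻ t in Ioi s, h t) :
    ∀ r ∈ Ioi a, f (V r) ≤ ∫⁻ t in Ioi r, ENNReal.ofReal (v t) * h (V t) := by
  intro r hr
  have hsub : Ioi r ⊆ Ioi a := Ioi_subset_Ioi (le_of_lt hr)
  have himage_tail : V '' Ioi r = Ioi (V r) :=
    image_Ioi_of_strictMonoOn (strictMonoOn_Ioi_of_hasDerivAt_pos hderiv hv) himage hr
  rw [← lintegral_Ioi_eq_lintegral_Ioi_comp (fun t ht => hderiv t (hsub ht))
    (fun t ht => hv t (hsub ht)) himage_tail h]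
  exact hf _ (himage.subset (mem_image_of_mem V hr))

theorem lintegral_hardy_of_leftInvOn {p c : ℝ} (hp : 1 ≤ p) (hc : 0 < c) {V v G : ℝ → ℝ}
    (hderiv : ∀ r ∈ Ioi 0, HasDerivAt V (v r) r) (hv : ∀ r ∈ Ioi 0, 0 < v r)
    (himage : V '' Ioi 0 = Ioi 0) (hGV : LeftInvOn G V (Ioi 0)) {f h : ℝ → ℝ≥0∞}
    (hh : Measurable h) (hf : ∀ s ∈ Ioi 0, f s ≤ ∫⁻ t in Ioi s, h t) :
    ENNReal.ofReal (c ^ p) *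
        ∫⁻ s in Ioi 0, ENNReal.ofReal (G s ^ (p * c - 1) / v (G s)) * f s ^ p ≤
      ∫⁻ s in Ioi 0, ENNReal.ofReal (v (G s) ^ (p - 1) * G s ^ (p * c + p - 1)) * h s ^ p := by
  have hV : StrictMonoOn V (Ioi 0) := strictMonoOn_Ioi_of_hasDerivAt_pos hderiv hv
  have V_aemeasurable : AEMeasurable V (volume.restrict (Ioi 0)) :=
    aemeasurable_restrict_of_monotoneOn measurableSet_Ioi hV.monotoneOn
  have v_aemeasurable : AEMeasurable v (volume.restrict (Ioi 0)) :=
    (measurable_deriv V).aemeasurable.congr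
      (ae_restrict_of_forall_mem measurableSet_Ioi fun r hr => (hderiv r hr).deriv)
  let k (r : ℝ) : ℝ≥0∞ := ENNReal.ofReal (v r) * h (V r)
  have hk : AEMeasurable k (volume.restrict (Ioi 0)) :=
    v_aemeasurable.ennreal_ofReal.mul (hh.comp_aemeasurable V_aemeasurable)
  have comp_le : ∀ r ∈ Ioi 0, f (V r) ≤ ∫⁻ t in Ioi r, k t :=
    comp_le_lintegral_Ioi_comp hderiv hv himage hf
  have substitution := lintegral_Ioi_eq_lintegral_Ioi_comp hderiv hv himage
  calc _ = ENNReal.ofReal (c ^ p) *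
          ∫⁻ r in Ioi 0, ENNReal.ofReal (r ^ (p * c - 1)) * f (V r) ^ p := by
        rw [substitution fun s => ENNReal.ofReal (G s ^ (p * c - 1) / v (G s)) * f s ^ p]
        congr 1
        refine setLIntegral_congr_fun measurableSet_Ioi fun r hr => ?_
        simp only [hGV hr]
        rw [← mul_assoc, ← ENNReal.ofReal_mul (hv r hr).le, mul_div_cancel₀ _ (hv r hr).ne']
    _ ≤ ENNReal.ofReal (c ^ p) *
          ∫⁻ r in Ioi 0, ENNReal.ofReal (r ^ (p * c - 1)) * (∫⁻ t in Ioi r, k t) ^ p := by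
        refine mul_le_mul_right (setLIntegral_mono' measurableSet_Ioi fun r hr => ?_) _
        gcongr
        exact comp_le r hr
    _ ≤ ∫⁻ r in Ioi 0, ENNReal.ofReal (r ^ (p * c + p - 1)) * k r ^ p :=
        lintegral_Ioi_rpow_mul_lintegral_Ioi_rpow_le hp hc hk
    _ = _ := by
        rw [substitution fun s =>
          ENNReal.ofReal (v (G s) ^ (p - 1) * G s ^ (p * c + p - 1)) * h s ^ p]
        refine setLIntegral_congr_fun measurableSet_Ioi fun r hr => ?_
        have hvr := hv r hr
        simp only [hGV hr, k]
        rw [ENNReal.mul_rpow_of_nonneg _ _ (by positivity), ENNReal.ofReal_rpow_of_pos hvr,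
          ← mul_assoc, ← mul_assoc, ← ENNReal.ofReal_mul' (by positivity),
          ← ENNReal.ofReal_mul hvr.le, Real.rpow_sub_one hvr.ne']
        congr 2
        field_simp

theorem hasDerivAt_of_eq_integral {V v : ℝ → ℝ} (hv : ContinuousOn v (Ici 0))
    (hV : ∀ r : ℝ, 0 ≤ r → V r = ∫ t in (0 : ℝ)..r, v t) {r : ℝ} (hr : r ∈ Ioi 0) :
    HasDerivAt V (v r) r := by
  have hv_Ioi : ContinuousOn v (Ioi 0) := hv.mono Ioi_subset_Ici_self
  have integrable : IntervalIntegrable v volume 0 r :=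
    (hv.mono Icc_subset_Ici_self).intervalIntegrable_of_Icc (le_of_lt hr)
  refine (intervalIntegral.integral_hasDerivAt_right integrable
    (hv_Ioi.stronglyMeasurableAtFilter isOpen_Ioi r hr)
    (hv_Ioi.continuousAt (Ioi_mem_nhds hr))).congr_of_eventuallyEq ?_
  filter_upwards [Ioi_mem_nhds hr] with t ht using hV t (le_of_lt ht)

theorem image_Ioi_of_eq_integral {V v G : ℝ → ℝ} (hv : ContinuousOn v (Ici 0))
    (hV : ∀ r : ℝ, 0 ≤ r → V r = ∫ t in (0 : ℝ)..r, v t) (hpos : ∀ r ∈ Ioi 0, 0 < v r)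
    (hVG : ∀ s : ℝ, 0 ≤ s → 0 ≤ G s ∧ V (G s) = s) : V '' Ioi 0 = Ioi 0 := by
  have V_pos : ∀ r ∈ Ioi 0, 0 < V r := by
    intro r hr
    rw [hV r (le_of_lt hr)]
    exact intervalIntegral.intervalIntegral_pos_of_pos_on
      ((hv.mono Icc_subset_Ici_self).intervalIntegrable_of_Icc (le_of_lt hr))
      (fun t ht => hpos t ht.1) hr
  have V_zero : V 0 = 0 := by rw [hV 0 le_rfl, intervalIntegral.integral_same]
  refine Subset.antisymm (image_subset_iff.2 V_pos) fun s (hs : 0 < s) => ?_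
  obtain ⟨hG, hVGs⟩ := hVG s hs.le
  exact ⟨G s, hG.lt_of_ne fun h => hs.ne (by rw [← hVGs, ← h, V_zero]), hVGs⟩

theorem omegaN_pos {N : ℕ} (hN : 0 < N) : 0 < omegaN N := by
  have : 0 < Real.Gamma ((N : ℝ) / 2) := Real.Gamma_pos_of_pos (by positivity)
  unfold omegaN
  positivity

theorem model_hardy_weight_eq {p ω ρ y : ℝ} {N : ℕ} (hp : 1 ≤ p) (hpN : p < N) (hω : 0 < ω)
    (hρ : 0 < ρ) (hy : 0 < y) :
    ω * (((N - p) / p) ^ p * (ρ ^ (p * ((N - p) / p) - 1) / (ω * y ^ (N - 1)))) =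
      ((N - p) / p) ^ p * ρ ^ (N - p - 1) * y ^ (1 - N : ℝ) := by
  have hN : 1 ≤ N := by exact_mod_cast (hp.trans_lt hpN).le
  have power : y ^ (1 - N : ℝ) = (y ^ (N - 1))⁻¹ := by
    rw [← Real.rpow_natCast, ← Real.rpow_neg hy.le, Nat.cast_sub hN]
    ring_nf
  rw [mul_div_cancel₀ _ (by positivity), power]
  field_simp

theorem model_energy_weight_eq {p ω ρ y : ℝ} {N : ℕ} (hp : 1 ≤ p) (hpN : p < N) (hω : 0 < ω)
    (hρ : 0 < ρ) (hy : 0 < y) :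
    ω * ((ω * y ^ (N - 1)) ^ (p - 1) * ρ ^ (p * ((N - p) / p) + p - 1)) =
      ω ^ p * (y ^ (p - 1) * ρ) ^ (N - 1) := by
  have hN : 1 ≤ N := by exact_mod_cast (hp.trans_lt hpN).le
  have exponent : p * ((N - p) / p) + p - 1 = ((N - 1 : ℕ) : ℝ) := by
    rw [mul_div_cancel₀ _ (by positivity), Nat.cast_sub hN]
    ring
  rw [exponent, Real.rpow_natCast, Real.mul_rpow hω.le (by positivity), Real.rpow_sub_one hω.ne',
    ← Real.rpow_pow_comm hy.le, mul_pow]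
  field_simp

theorem lintegral_hardy_model {p ω : ℝ} {N : ℕ} (hp : 1 ≤ p) (hpN : p < N) (hω : 0 < ω)
    {ψ V G : ℝ → ℝ} (hψ : ContinuousOn ψ (Ici 0)) (hpos : ∀ r : ℝ, 0 < r → 0 < ψ r)
    (hV : ∀ r : ℝ, 0 ≤ r → V r = ω * ∫ t in (0 : ℝ)..r, ψ t ^ (N - 1))
    (hGV : ∀ r : ℝ, 0 ≤ r → G (V r) = r) (hVG : ∀ s : ℝ, 0 ≤ s → 0 ≤ G s ∧ V (G s) = s)
    {f h : ℝ → ℝ≥0∞} (hh : Measurable h) (hf : ∀ s ∈ Ioi 0, f s ≤ ∫⁻ t in Ioi s, h t) :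
    ∫⁻ s in Ioi 0, ENNReal.ofReal
        (((N - p) / p) ^ p * G s ^ (N - p - 1) * ψ (G s) ^ (1 - N : ℝ)) * f s ^ p ≤
      ∫⁻ s in Ioi 0, ENNReal.ofReal (ω ^ p * (ψ (G s) ^ (p - 1) * G s) ^ (N - 1)) * h s ^ p := by
  let v (r : ℝ) : ℝ := ω * ψ r ^ (N - 1)
  have hv : ContinuousOn v (Ici 0) := (hψ.pow _).const_mul ω
  have hv_pos : ∀ r ∈ Ioi 0, 0 < v r := fun r hr => mul_pos hω (pow_pos (hpos r hr) _)
  have hV_integral : ∀ r : ℝ, 0 ≤ r → V r = ∫ t in (0 : ℝ)..r, v t := fun r hr => by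
    rw [hV r hr, intervalIntegral.integral_const_mul]
  have himage : V '' Ioi 0 = Ioi 0 := image_Ioi_of_eq_integral hv hV_integral hv_pos hVG
  have hc : 0 < (N - p) / p := div_pos (sub_pos.2 hpN) (zero_lt_one.trans_le hp)
  have hardy := lintegral_hardy_of_leftInvOn hp hc
    (fun r hr => hasDerivAt_of_eq_integral hv hV_integral hr) hv_pos himage
    (fun r hr => hGV r (le_of_lt hr)) hh hf
  have G_pos : ∀ s ∈ Ioi 0, 0 < G s := by
    rw [← himage]
    rintro _ ⟨r, hr, rfl⟩
    rwa [hGV r (le_of_lt hr)]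
  calc _ = ENNReal.ofReal ω * (ENNReal.ofReal (((N - p) / p) ^ p) * ∫⁻ s in Ioi 0,
          ENNReal.ofReal (G s ^ (p * ((N - p) / p) - 1) / v (G s)) * f s ^ p) := by
        rw [← lintegral_const_mul' _ _ ENNReal.ofReal_ne_top,
          ← lintegral_const_mul' _ _ ENNReal.ofReal_ne_top]
        refine setLIntegral_congr_fun measurableSet_Ioi fun s hs => ?_
        rw [← model_hardy_weight_eq hp hpN hω (G_pos s hs) (hpos _ (G_pos s hs)),
          ENNReal.ofReal_mul hω.le, ENNReal.ofReal_mul (by positivity)]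
        simp only [v, mul_assoc]
    _ ≤ ENNReal.ofReal ω * ∫⁻ s in Ioi 0, ENNReal.ofReal
          (v (G s) ^ (p - 1) * G s ^ (p * ((N - p) / p) + p - 1)) * h s ^ p := by gcongr
    _ = _ := by
        rw [← lintegral_const_mul' _ _ ENNReal.ofReal_ne_top]
        refine setLIntegral_congr_fun measurableSet_Ioi fun s hs => ?_
        rw [← model_energy_weight_eq hp hpN hω (G_pos s hs) (hpos _ (G_pos s hs)),
          ENNReal.ofReal_mul hω.le]
        simp only [v, mul_assoc]

theorem stmt_17_general {E : Type*} [NormedAddCommGroup E] [NormedSpace ℝ E] [CompleteSpace E]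
    {p ω : ℝ} {N : ℕ} (hp : 1 ≤ p) (hpN : p < N) (hω : 0 < ω) {ψ V G : ℝ → ℝ}
    (hψ : ContinuousOn ψ (Ici 0)) (hpos : ∀ r : ℝ, 0 < r → 0 < ψ r)
    (hV : ∀ r : ℝ, 0 ≤ r → V r = ω * ∫ t in (0 : ℝ)..r, ψ t ^ (N - 1))
    (hGV : ∀ r : ℝ, 0 ≤ r → G (V r) = r) (hVG : ∀ s : ℝ, 0 ≤ s → 0 ≤ G s ∧ V (G s) = s)
    {f : ℝ → E} (hac : ∀ a b : ℝ, 0 < a → a ≤ b → f b - f a = ∫ t in a..b, deriv f t)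
    (hlim : Tendsto f atTop (nhds 0)) :
    ∫⁻ s in Ioi (0 : ℝ), ENNReal.ofReal
        (((N - p) / p) ^ p * ‖f s‖ ^ p * G s ^ (N - p - 1) * ψ (G s) ^ ((1 : ℝ) - N)) ≤
      ∫⁻ s in Ioi (0 : ℝ), ENNReal.ofReal
        (ω ^ p * ‖deriv f s‖ ^ p * (ψ (G s) ^ (p - 1) * G s) ^ (N - 1)) := by
  borelize E
  have hardy := lintegral_hardy_model hp hpN hω hψ hpos hV hGV hVG (measurable_deriv f).enorm
    fun s hs => enorm_le_lintegral_Ioi_enorm (fun b hb => hac s b hs hb) hlim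
  have ofReal_mul_enorm_rpow (w : ℝ) (x : E) :
      ENNReal.ofReal w * ‖x‖ₑ ^ p = ENNReal.ofReal (w * ‖x‖ ^ p) := by
    rw [ENNReal.ofReal_mul' (by positivity), ← ofReal_norm,
      ENNReal.ofReal_rpow_of_nonneg (norm_nonneg x) (zero_le_one.trans hp)]
  simp only [ofReal_mul_enorm_rpow] at hardy
  convert hardy using 4 <;> ring

end

/-- One-dimensional form of the weighted Hardy inequality on a
Cartan–Hadamard model manifold with weight `Ψ(r)^{N-1}`, `Ψ(r) = r/ψ(r)`:
`((N−2)/2)² ∫₀^∞ f² G^{N−3} ψ(G)^{1−N} ds ≤ ω_N² ∫₀^∞ f'² (ψ(G)·G)^{N−1} ds`. -/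
theorem stmt_17 (N : ℕ) (hN : 3 ≤ N) (ψ V G : ℝ → ℝ)
    (hψ : ContDiff ℝ (⊤ : ℕ∞) ψ) (h0 : ψ 0 = 0) (h1 : deriv ψ 0 = 1)
    (hpos : ∀ r : ℝ, 0 < r → 0 < ψ r)
    (hconv : ∀ r : ℝ, 0 < r → 0 ≤ deriv (deriv ψ) r)
    (hV : ∀ r : ℝ, 0 ≤ r → V r = omegaN N * ∫ t in (0:ℝ)..r, ψ t ^ (N - 1))
    (hGV : ∀ r : ℝ, 0 ≤ r → G (V r) = r)
    (hVG : ∀ s : ℝ, 0 ≤ s → 0 ≤ G s ∧ V (G s) = s)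
    (f : ℝ → ℝ) (hf0 : ∀ s : ℝ, 0 < s → 0 ≤ f s)
    (hanti : AntitoneOn f (Set.Ioi 0))
    (hac : ∀ a b : ℝ, 0 < a → a ≤ b → f b - f a = ∫ t in a..b, deriv f t)
    (hlim : Filter.Tendsto f Filter.atTop (nhds 0))
    (hfin : IntegrableOn
      (fun s => (deriv f s) ^ 2 * (ψ (G s) * G s) ^ (N - 1)) (Set.Ioi 0)) :
    ∫⁻ s in Set.Ioi (0:ℝ),
        ENNReal.ofReal
          ((((N : ℝ) - 2) / 2) ^ 2 * (f s) ^ 2 * G s ^ ((N : ℝ) - 3) *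
            ψ (G s) ^ ((1:ℝ) - (N : ℝ))) ≤
      ∫⁻ s in Set.Ioi (0:ℝ),
        ENNReal.ofReal
          (omegaN N ^ 2 * (deriv f s) ^ 2 * (ψ (G s) * G s) ^ (N - 1)) := by
  have hardy := stmt_17_general one_le_two (by exact_mod_cast hN) (omegaN_pos (by omega))
    hψ.continuous.continuousOn hpos hV hGV hVG hac hlim
  simpa only [Real.rpow_two, Real.norm_eq_abs, sq_abs, sub_sub, two_add_one_eq_three,
    show (2 : ℝ) - 1 = 1 by norm_num, Real.rpow_one] using hardy
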